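/- If x ∈ ℝ^m has the distinct subset-sum property, then the random walk W_x(t) = Σ_{i=1}^t ε_i x_{σ(i)} (with σ a uniformly random permutation of [m] and ε uniform in {±1}^m) satisfies P[∀ t ∈ [m] : W_x(t) > 0] = (1/4^m)·C(2m, m). -/

import Mathlib

/-!
Let `p(y, S)` be the number of orderings of `S` along which the walk with steps `y` stays positive.
If no nonempty subset sum of `y` vanishes, cutting an ordering of `S` at the minimum of its walk and
reversing the first part explains the identity `∑_{A ⊆ S} p(-y, A) p(y, S \ A) = |S|!`. It can be
proved without following the minimum: say the total sum is positive (the identity is symmetric under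
`y ↦ -y`). Wherever `p(-y, A) ≠ 0` the sum over `S \ A` is then positive too, so the last step of
`S \ A` can be removed freely, and both sides satisfy the same recursion.

Now put `y = ε • x` and sum over all signs `ε`. The two factors depend on disjoint sets of signs, so
they decouple, and the minus sign is absorbed. Hence the probabilities `u n` that the walk with `n`
steps stays positive satisfy `∑_k u k * u (n - k) = 1`. So do the numbers `C(2n, n) / 4^n`, and
convolution square roots with a given nonzero initial value are unique.
-/

open Finset
open scoped Nat

section Convolution

theorem two_mul_sum_antidiagonal_fst_mul {R : Type*} [CommSemiring R] (f : ℕ → R) (n : ℕ) :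
    2 * ∑ p ∈ antidiagonal n, p.1 * (f p.1 * f p.2) = n * ∑ p ∈ antidiagonal n, f p.1 * f p.2 := by
  have hswap : ∑ p ∈ antidiagonal n, (p.1 : R) * (f p.1 * f p.2) =
      ∑ p ∈ antidiagonal n, (p.2 : R) * (f p.1 * f p.2) := by
    rw [← Finset.Nat.sum_antidiagonal_swap]
    exact sum_congr rfl fun p _ => by simp only [Prod.fst_swap, Prod.snd_swap, mul_comm]
  calc 2 * ∑ p ∈ antidiagonal n, (p.1 : R) * (f p.1 * f p.2)
    _ = ∑ p ∈ antidiagonal n, ((p.1 : R) + p.2) * (f p.1 * f p.2) := by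
      simp only [add_mul, sum_add_distrib, ← hswap, two_mul]
    _ = n * ∑ p ∈ antidiagonal n, f p.1 * f p.2 := by
      rw [mul_sum]
      exact sum_congr rfl fun p hp => by rw [← mem_antidiagonal.1 hp, Nat.cast_add]

theorem sum_antidiagonal_centralBinom_mul_centralBinom (n : ℕ) :
    ∑ p ∈ antidiagonal n, p.1.centralBinom * p.2.centralBinom = 4 ^ n := by
  induction n with
  | zero => simp
  | succ n ih =>
    have hshift : ∑ p ∈ antidiagonal (n + 1), p.1 * (p.1.centralBinom * p.2.centralBinom) =
        4 * ∑ p ∈ antidiagonal n, p.1 * (p.1.centralBinom * p.2.centralBinom) +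
          2 * ∑ p ∈ antidiagonal n, p.1.centralBinom * p.2.centralBinom := by
      rw [Nat.sum_antidiagonal_succ, mul_sum, mul_sum, ← sum_add_distrib, zero_mul, zero_add]
      refine sum_congr rfl fun p _ => ?_
      rw [← mul_assoc, Nat.succ_mul_centralBinom_succ]
      ring
    refine Nat.eq_of_mul_eq_mul_left n.add_one_pos ?_
    have h := two_mul_sum_antidiagonal_fst_mul Nat.centralBinom n
    have h' := two_mul_sum_antidiagonal_fst_mul Nat.centralBinom (n + 1)
    simp only [Nat.cast_id, hshift, ih] at h h'
    linear_combination 4 * h - h'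

variable {α : Type*} [DecidableEq α]

theorem sum_powerset_factorial_mul {R : Type*} [CommSemiring R] (f g : ℕ → R) (S : Finset α) :
    ∑ A ∈ S.powerset, (#A)! * f #A * ((#(S \ A))! * g #(S \ A)) =
      (#S)! * ∑ p ∈ antidiagonal #S, f p.1 * g p.2 := by
  calc ∑ A ∈ S.powerset, (#A)! * f #A * ((#(S \ A))! * g #(S \ A))
    _ = ∑ A ∈ S.powerset, (#A)! * f #A * ((#S - #A)! * g (#S - #A)) :=
      sum_congr rfl fun A hA => by rw [card_sdiff_of_subset (mem_powerset.1 hA)]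
    _ = ∑ k ∈ range (#S + 1), (#S).choose k * (k ! * f k * ((#S - k)! * g (#S - k))) := by
      rw [sum_powerset_apply_card fun k => (k ! : R) * f k * ((#S - k)! * g (#S - k))]
      simp only [nsmul_eq_mul]
    _ = (#S)! * ∑ p ∈ antidiagonal #S, f p.1 * g p.2 := by
      rw [Nat.sum_antidiagonal_eq_sum_range_succ_mk, mul_sum]
      refine sum_congr rfl fun k hk => ?_
      rw [← Nat.choose_mul_factorial_mul_factorial (mem_range_succ_iff.1 hk)]
      push_cast
      ring

theorem sum_powerset_factorial_mul_centralBinom (S : Finset α) :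
    ∑ A ∈ S.powerset, (#A)! * (#A).centralBinom * ((#(S \ A))! * (#(S \ A)).centralBinom) =
      (#S)! * 4 ^ #S := by
  simpa only [Nat.cast_id, sum_antidiagonal_centralBinom_mul_centralBinom] using
    sum_powerset_factorial_mul Nat.centralBinom Nat.centralBinom S

theorem sum_powerset_eq_add_add_sum_ssubsets {M : Type*} [AddCommMonoid M] {S : Finset α}
    (hS : S.Nonempty) (F : Finset α → M) :
    ∑ A ∈ S.powerset, F A = F S + (F ∅ + ∑ A ∈ S.ssubsets.erase ∅, F A) := by
  rw [add_sum_erase _ _ (empty_mem_ssubsets hS), ssubsets,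
    add_sum_erase _ _ (mem_powerset_self S)]

theorem eq_of_sum_powerset_mul_sdiff_eq {R : Type*} [CommSemiring R] [IsCancelAdd R]
    [IsCancelMulZero R] [CharZero R] {f g : Finset α → R} (hempty : f ∅ = g ∅) (hne : f ∅ ≠ 0)
    (hconv : ∀ S, ∑ A ∈ S.powerset, f A * f (S \ A) = ∑ A ∈ S.powerset, g A * g (S \ A)) :
    f = g := by
  funext S
  induction S using Finset.strongInduction with
  | H S ih =>
    obtain rfl | hS := S.eq_empty_or_nonempty
    · exact hempty
    have hrest : ∑ A ∈ S.ssubsets.erase ∅, f A * f (S \ A) =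
        ∑ A ∈ S.ssubsets.erase ∅, g A * g (S \ A) := by
      refine sum_congr rfl fun A hA => ?_
      obtain ⟨hA₀, hAS⟩ : A ≠ ∅ ∧ A ⊂ S := by simpa only [mem_erase, mem_ssubsets] using hA
      rw [ih A hAS, ih (S \ A) (sdiff_ssubset hAS.subset (nonempty_iff_ne_empty.2 hA₀))]
    have h := hconv S
    rw [sum_powerset_eq_add_add_sum_ssubsets hS, sum_powerset_eq_add_add_sum_ssubsets hS, hrest,
      ← add_assoc, ← add_assoc, Finset.sdiff_self, sdiff_empty, ← hempty, mul_comm (f S),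
      mul_comm (g S), ← two_mul, ← two_mul] at h
    exact mul_left_cancel₀ hne (mul_left_cancel₀ two_ne_zero (add_right_cancel h))

theorem sum_mul_sum_of_dependsOn {β R : Type*} [Fintype α] [Fintype β] [Semiring R]
    {f g : (α → β) → R} {s t : Set α} (hf : DependsOn f s) (hg : DependsOn g t)
    (hst : Disjoint s t) :
    (∑ u, f u) * ∑ u, g u = Fintype.card (α → β) * ∑ u, f u * g u := by
  classical
  let swap : (α → β) × (α → β) → (α → β) × (α → β) :=
    fun p => (s.piecewise p.1 p.2, s.piecewise p.2 p.1)
  have hswap : swap.Involutive := fun p => by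
    ext i <;> by_cases hi : i ∈ s <;> simp [swap, hi]
  calc (∑ u, f u) * ∑ v, g v
    _ = ∑ p : (α → β) × (α → β), f p.1 * g p.2 := by
      rw [sum_mul_sum, Fintype.sum_prod_type]
    _ = ∑ p : (α → β) × (α → β), f (swap p).1 * g (swap p).1 := by
      refine sum_congr rfl fun p _ => ?_
      congr 1
      · exact hf fun i hi => (s.piecewise_eq_of_mem _ _ hi).symm
      · exact hg fun i hi => (s.piecewise_eq_of_notMem _ _ (hst.notMem_of_mem_right hi)).symm
    _ = ∑ p : (α → β) × (α → β), f p.1 * g p.1 :=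
      Equiv.sum_comp hswap.toPerm fun p => f p.1 * g p.1
    _ = Fintype.card (α → β) * ∑ u, f u * g u := by
      simp only [Fintype.sum_prod_type_right, sum_const, card_univ, nsmul_eq_mul]

end Convolution

section Orderings

theorem sum_comp_eq_sum_of_card_eq {α M : Type*} [AddCommMonoid M] {k : ℕ} {S : Finset α}
    (hS : #S = k) {f : Fin k → α} (hf : f.Injective) (hfS : ∀ i, f i ∈ S) (y : α → M) :
    ∑ i, y (f i) = ∑ a ∈ S, y a := by
  classical
  have himage : univ.image f = S := by
    refine eq_of_subset_of_card_le (image_subset_iff.2 fun i _ => hfS i) ?_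
    rw [card_image_of_injective _ hf, card_univ, Fintype.card_fin, hS]
  rw [← himage, sum_image hf.injOn]

variable {α G : Type*} [DecidableEq α] [AddCommGroup G] [LinearOrder G]

/-- The walk with steps `s` stays positive; its starting value `0` is not counted. -/
def IsPositiveWalk {k : ℕ} (s : Fin k → G) : Prop :=
  ∀ t, 0 < ∑ i ∈ Iic t, s i

instance {k : ℕ} (s : Fin k → G) : Decidable (IsPositiveWalk s) :=
  inferInstanceAs (Decidable (∀ t, 0 < ∑ i ∈ Iic t, s i))

/-- The sequences of `k` distinct elements of `S` along which the walk with steps `y` stays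
positive. For `k = #S` these are orderings of `S`; keeping `k` as a separate parameter avoids casts
when an element is removed from `S`. -/
def positiveOrderings (y : α → G) (k : ℕ) (S : Finset α) : Finset (Fin k → α) :=
  {f ∈ Fintype.piFinset fun _ => S | f.Injective ∧ IsPositiveWalk (y ∘ f)}

/-- The number of orderings of `S` along which the walk with steps `y` stays positive. -/
def numPositiveOrderings (y : α → G) (S : Finset α) : ℕ :=
  #(positiveOrderings y #S S)

theorem isPositiveWalk_snoc {k : ℕ} {s : Fin k → G} {a : G} :
    IsPositiveWalk (Fin.snoc s a : Fin (k + 1) → G) ↔ IsPositiveWalk s ∧ 0 < ∑ i, s i + a := by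
  have hlast : Iic (Fin.last k) = univ := Iic_top
  simp only [IsPositiveWalk, Fin.forall_fin_succ', hlast, Fin.sum_Iic_castSucc,
    Fin.sum_univ_castSucc, Fin.snoc_castSucc, Fin.snoc_last]

theorem snoc_mem_positiveOrderings {y : α → G} {k : ℕ} {S : Finset α} (hS : #S = k + 1)
    {g : Fin k → α} {a : α} :
    (Fin.snoc g a : Fin (k + 1) → α) ∈ positiveOrderings y (k + 1) S ↔
      0 < ∑ i ∈ S, y i ∧ a ∈ S ∧ g ∈ positiveOrderings y k (S.erase a) := by
  have htotal (ha : a ∈ S) (hg : g.Injective) (hgS : ∀ i, g i ∈ S.erase a) :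
      ∑ i, y (g i) + y a = ∑ i ∈ S, y i := by
    rw [sum_comp_eq_sum_of_card_eq (by rw [card_erase_of_mem ha, hS, Nat.add_sub_cancel]) hg hgS,
      sum_erase_add _ _ ha]
  simp only [positiveOrderings, mem_filter, Fintype.mem_piFinset, Fin.forall_fin_succ',
    Fin.snoc_castSucc, Fin.snoc_last, Fin.snoc_injective_iff, Fin.comp_snoc, isPositiveWalk_snoc,
    Function.comp_apply]
  constructor
  · rintro ⟨⟨hgS, ha⟩, ⟨hg, hag⟩, hwalk, hpos⟩
    have hgS' (i : Fin k) : g i ∈ S.erase a := mem_erase.2 ⟨fun h => hag ⟨i, h⟩, hgS i⟩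
    exact ⟨htotal ha hg hgS' ▸ hpos, ha, hgS', hg, hwalk⟩
  · rintro ⟨hpos, ha, hgS, hg, hwalk⟩
    have hag : a ∉ Set.range g := by
      rintro ⟨i, rfl⟩
      exact notMem_erase _ _ (hgS i)
    exact ⟨⟨fun i => mem_of_mem_erase (hgS i), ha⟩, ⟨hg, hag⟩, hwalk,
      (htotal ha hg hgS).symm ▸ hpos⟩

theorem card_positiveOrderings_succ (y : α → G) {k : ℕ} {S : Finset α} (hS : #S = k + 1) :
    #(positiveOrderings y (k + 1) S) =
      if 0 < ∑ i ∈ S, y i then ∑ a ∈ S, #(positiveOrderings y k (S.erase a)) else 0 := by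
  split_ifs with hpos
  · rw [← card_sigma]
    refine card_nbij' (fun f => ⟨f (Fin.last k), Fin.init f⟩) (fun p => Fin.snoc p.2 p.1)
      ?_ ?_ ?_ ?_
    · intro f hf
      rw [mem_coe, ← Fin.snoc_init_self f, snoc_mem_positiveOrderings hS] at hf
      exact mem_sigma.2 hf.2
    · intro p hp
      exact (snoc_mem_positiveOrderings hS).2 ⟨hpos, mem_sigma.1 hp⟩
    · exact fun f _ => Fin.snoc_init_self f
    · exact fun p _ => by simp only [Fin.snoc_last, Fin.init_snoc]
  · refine card_eq_zero.2 (eq_empty_of_forall_notMem fun f hf => hpos ?_)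
    rw [← Fin.snoc_init_self f, snoc_mem_positiveOrderings hS] at hf
    exact hf.1

theorem numPositiveOrderings_empty (y : α → G) : numPositiveOrderings y ∅ = 1 := by
  change #(positiveOrderings y 0 ∅) = 1
  simp [positiveOrderings, IsPositiveWalk, Function.injective_of_subsingleton]

theorem numPositiveOrderings_of_nonempty (y : α → G) {S : Finset α} (hS : S.Nonempty) :
    numPositiveOrderings y S =
      if 0 < ∑ i ∈ S, y i then ∑ a ∈ S, numPositiveOrderings y (S.erase a) else 0 := by
  obtain ⟨k, hk⟩ := Nat.exists_eq_add_one_of_ne_zero hS.card_ne_zero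
  rw [numPositiveOrderings, hk, card_positiveOrderings_succ y hk]
  refine if_congr Iff.rfl (sum_congr rfl fun a ha => ?_) rfl
  rw [numPositiveOrderings, card_erase_of_mem ha, hk, Nat.add_sub_cancel]

theorem numPositiveOrderings_of_sum_pos {y : α → G} {S : Finset α} (hpos : 0 < ∑ i ∈ S, y i) :
    numPositiveOrderings y S = ∑ a ∈ S, numPositiveOrderings y (S.erase a) := by
  rw [numPositiveOrderings_of_nonempty y (nonempty_of_sum_ne_zero hpos.ne'), if_pos hpos]

theorem numPositiveOrderings_of_sum_neg {y : α → G} {S : Finset α} (hneg : ∑ i ∈ S, y i < 0) :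
    numPositiveOrderings y S = 0 := by
  rw [numPositiveOrderings_of_nonempty y (nonempty_of_sum_ne_zero hneg.ne), if_neg hneg.not_gt]

theorem numPositiveOrderings_congr {y z : α → G} {S : Finset α} (h : ∀ i ∈ S, y i = z i) :
    numPositiveOrderings y S = numPositiveOrderings z S := by
  unfold numPositiveOrderings positiveOrderings
  refine congrArg card (filter_congr fun f hf => ?_)
  rw [show y ∘ f = z ∘ f from funext fun i => h _ (Fintype.mem_piFinset.1 hf i)]

end Orderings

section MinimumSplits

variable {α G : Type*} [DecidableEq α] [AddCommGroup G] [LinearOrder G]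

/-- The number of ways to split `S` into `A` and `S \ A` and to order `A` positively for the steps
`-y` and `S \ A` positively for the steps `y`. Reversing the ordering of `A` and appending that of
`S \ A` gives the orderings of `S` whose walk has a strict minimum at time `#A`. -/
def numMinimumSplits (y : α → G) (S : Finset α) : ℕ :=
  ∑ A ∈ S.powerset, numPositiveOrderings (-y) A * numPositiveOrderings y (S \ A)

theorem numMinimumSplits_neg (y : α → G) (S : Finset α) :
    numMinimumSplits (-y) S = numMinimumSplits y S := by
  refine sum_nbij' (S \ ·) (S \ ·) ?_ ?_ ?_ ?_ fun A hA => ?_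
  · simp
  · simp
  · simp +contextual
  · simp +contextual
  · rw [neg_neg, mul_comm, Finset.sdiff_sdiff_eq_self (mem_powerset.1 hA)]

variable [IsOrderedAddMonoid G]

theorem numMinimumSplits_of_sum_pos {y : α → G} {S : Finset α} (hpos : 0 < ∑ i ∈ S, y i) :
    numMinimumSplits y S = ∑ a ∈ S, numMinimumSplits y (S.erase a) := by
  have hterm (A : Finset α) (hA : A ⊆ S) :
      numPositiveOrderings (-y) A * numPositiveOrderings y (S \ A) =
        ∑ a ∈ S \ A, numPositiveOrderings (-y) A * numPositiveOrderings y ((S \ A).erase a) := by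
    rw [← mul_sum]
    obtain hA_pos | hA_nonpos := lt_or_ge 0 (∑ i ∈ A, y i)
    · have hneg : ∑ i ∈ A, (-y) i < 0 := by simpa using hA_pos
      rw [numPositiveOrderings_of_sum_neg hneg, zero_mul, zero_mul]
    · rw [← sum_sdiff hA] at hpos
      rw [numPositiveOrderings_of_sum_pos (hpos.trans_le (add_le_of_nonpos_right hA_nonpos))]
  calc numMinimumSplits y S
    _ = ∑ A ∈ S.powerset, ∑ a ∈ S \ A,
          numPositiveOrderings (-y) A * numPositiveOrderings y ((S \ A).erase a) :=
      sum_congr rfl fun A hA => hterm A (mem_powerset.1 hA)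
    _ = ∑ a ∈ S, ∑ A ∈ (S.erase a).powerset,
          numPositiveOrderings (-y) A * numPositiveOrderings y ((S \ A).erase a) := by
      refine sum_comm' fun A a => ?_
      simp only [mem_powerset, mem_sdiff, subset_erase]
      tauto
    _ = ∑ a ∈ S, numMinimumSplits y (S.erase a) := by
      simp only [numMinimumSplits, erase_sdiff_comm]

theorem numMinimumSplits_eq_factorial {y : α → G}
    (hy : ∀ S : Finset α, S.Nonempty → ∑ i ∈ S, y i ≠ 0) (S : Finset α) :
    numMinimumSplits y S = (#S)! := by
  induction S using Finset.strongInduction with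
  | H S ih =>
    obtain rfl | hS := S.eq_empty_or_nonempty
    · simp [numMinimumSplits, numPositiveOrderings_empty]
    have hrec : numMinimumSplits y S = ∑ a ∈ S, numMinimumSplits y (S.erase a) := by
      obtain hneg | hpos := (hy S hS).lt_or_gt
      · rw [← numMinimumSplits_neg, numMinimumSplits_of_sum_pos (by simpa using hneg)]
        simp only [numMinimumSplits_neg]
      · exact numMinimumSplits_of_sum_pos hpos
    calc numMinimumSplits y S
      _ = ∑ a ∈ S, (#S - 1)! := hrec.trans <| sum_congr rfl fun a ha => by
        rw [ih _ (erase_ssubset ha), card_erase_of_mem ha]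
      _ = (#S)! := by
        rw [sum_const, smul_eq_mul, Nat.mul_factorial_pred hS.card_ne_zero]

end MinimumSplits

section Signs

variable {α G : Type*} [AddCommGroup G]

/-- The distinct subset-sum property. The condition `A ≠ B` only excludes `A = B = ∅`. -/
def HasDistinctSubsetSums (x : α → G) : Prop :=
  ∀ A B : Finset α, Disjoint A B → A ≠ B → ∑ i ∈ A, x i ≠ ∑ i ∈ B, x i

theorem HasDistinctSubsetSums.sum_units_smul_ne_zero {x : α → G} (hx : HasDistinctSubsetSums x)
    (ε : α → ℤˣ) {S : Finset α} (hS : S.Nonempty) : ∑ i ∈ S, (ε • x) i ≠ 0 := by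
  have hterm (i : α) : (ε • x) i = if ε i = 1 then x i else -x i := by
    obtain h | h := Int.units_eq_one_or (ε i) <;> simp [h]
  have hne : S.filter (ε · = 1) ≠ S.filter (¬ε · = 1) := by
    obtain ⟨a, ha⟩ := hS
    intro h
    simpa [ha] using Finset.ext_iff.1 h a
  simp only [hterm, sum_ite, sum_neg_distrib, ← sub_eq_add_neg]
  exact sub_ne_zero.2 (hx _ _ (disjoint_filter_filter_not S S _) hne)

variable [DecidableEq α] [LinearOrder G]

theorem dependsOn_numPositiveOrderings_smul (x : α → G) (S : Finset α) :
    DependsOn (fun ε : α → ℤˣ => numPositiveOrderings (ε • x) S) S :=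
  fun _ _ h => numPositiveOrderings_congr fun i hi => by simp only [Pi.smul_apply', h i hi]

variable [Fintype α]

/-- The number of pairs of signs `ε` on all of `α` and an ordering of `S` along which the walk with
steps `ε i • x i` stays positive. -/
def numSignedPositiveOrderings (x : α → G) (S : Finset α) : ℕ :=
  ∑ ε : α → ℤˣ, numPositiveOrderings (ε • x) S

theorem numSignedPositiveOrderings_eq_sum_neg (x : α → G) (S : Finset α) :
    numSignedPositiveOrderings x S = ∑ ε : α → ℤˣ, numPositiveOrderings (-(ε • x)) S := by
  rw [numSignedPositiveOrderings, ← Equiv.sum_comp (Equiv.neg (α → ℤˣ))]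
  refine sum_congr rfl fun ε _ => numPositiveOrderings_congr fun i _ => ?_
  simp only [Equiv.neg_apply, Pi.smul_apply', Pi.neg_apply, Units.neg_smul]

theorem numSignedPositiveOrderings_mul_of_disjoint (x : α → G) {A B : Finset α}
    (hAB : Disjoint A B) :
    numSignedPositiveOrderings x A * numSignedPositiveOrderings x B =
      Fintype.card (α → ℤˣ) *
        ∑ ε : α → ℤˣ, numPositiveOrderings (-(ε • x)) A * numPositiveOrderings (ε • x) B := by
  rw [numSignedPositiveOrderings_eq_sum_neg x A, numSignedPositiveOrderings]
  refine sum_mul_sum_of_dependsOn ?_ (dependsOn_numPositiveOrderings_smul x B)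
    (disjoint_coe.2 hAB)
  exact fun _ _ h => numPositiveOrderings_congr fun i hi => by
    simp only [Pi.neg_apply, Pi.smul_apply', h i hi]

variable [IsOrderedAddMonoid G]

theorem sum_powerset_numSignedPositiveOrderings_mul {x : α → G} (hx : HasDistinctSubsetSums x)
    (S : Finset α) :
    ∑ A ∈ S.powerset, numSignedPositiveOrderings x A * numSignedPositiveOrderings x (S \ A) =
      Fintype.card (α → ℤˣ) ^ 2 * (#S)! := by
  calc ∑ A ∈ S.powerset, numSignedPositiveOrderings x A * numSignedPositiveOrderings x (S \ A)
    _ = Fintype.card (α → ℤˣ) * ∑ ε : α → ℤˣ, numMinimumSplits (ε • x) S := by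
      simp only [numMinimumSplits]
      rw [sum_comm, mul_sum]
      exact sum_congr rfl fun A _ => numSignedPositiveOrderings_mul_of_disjoint x disjoint_sdiff
    _ = Fintype.card (α → ℤˣ) ^ 2 * (#S)! := by
      simp only [numMinimumSplits_eq_factorial fun _ => hx.sum_units_smul_ne_zero _, sum_const,
        card_univ, smul_eq_mul, sq, mul_assoc]

theorem numSignedPositiveOrderings_mul_four_pow {x : α → G} (hx : HasDistinctSubsetSums x)
    (S : Finset α) :
    numSignedPositiveOrderings x S * 4 ^ #S =
      Fintype.card (α → ℤˣ) * ((#S)! * (#S).centralBinom) := by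
  have hempty : numSignedPositiveOrderings x ∅ = Fintype.card (α → ℤˣ) := by
    simp only [numSignedPositiveOrderings, numPositiveOrderings_empty, sum_const, smul_eq_mul,
      mul_one, card_univ]
  refine congrFun (eq_of_sum_powerset_mul_sdiff_eq
    (f := fun A => numSignedPositiveOrderings x A * 4 ^ #A)
    (g := fun A => Fintype.card (α → ℤˣ) * ((#A)! * (#A).centralBinom)) ?_ ?_ fun S => ?_) S
  · simp [hempty]
  · simp [hempty]
  calc ∑ A ∈ S.powerset, numSignedPositiveOrderings x A * 4 ^ #A *
        (numSignedPositiveOrderings x (S \ A) * 4 ^ #(S \ A))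
    _ = 4 ^ #S * ∑ A ∈ S.powerset,
          numSignedPositiveOrderings x A * numSignedPositiveOrderings x (S \ A) := by
      rw [mul_sum]
      refine sum_congr rfl fun A hA => ?_
      rw [← card_sdiff_add_card_eq_card (mem_powerset.1 hA), pow_add]
      ring
    _ = Fintype.card (α → ℤˣ) ^ 2 * ((#S)! * 4 ^ #S) := by
      rw [sum_powerset_numSignedPositiveOrderings_mul hx]
      ring
    _ = ∑ A ∈ S.powerset, Fintype.card (α → ℤˣ) * ((#A)! * (#A).centralBinom) *
          (Fintype.card (α → ℤˣ) * ((#(S \ A))! * (#(S \ A)).centralBinom)) := by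
      rw [← sum_powerset_factorial_mul_centralBinom, mul_sum]
      exact sum_congr rfl fun A _ => by ring

end Signs

section Permutations

theorem sum_piFinset_neg_one_one {ι R M : Type*} [Fintype ι] [DecidableEq ι] [Ring R] [CharZero R]
    [DecidableEq R] [AddCommMonoid M] (F : (ι → R) → M) :
    ∑ ε ∈ Fintype.piFinset fun _ : ι => ({-1, 1} : Finset R), F ε =
      ∑ ε : ι → ℤˣ, F fun i => ((ε i : ℤ) : R) := by
  have hsigns : ({-1, 1} : Finset R) = univ.image fun u : ℤˣ => ((u : ℤ) : R) := by
    simp [UnitsInt.univ, pair_comm]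
  have hinj : Function.Injective fun (ε : ι → ℤˣ) i => ((ε i : ℤ) : R) :=
    (Int.cast_injective.comp Units.val_injective).comp_left
  rw [hsigns, Fintype.piFinset_image (fun _ (u : ℤˣ) => ((u : ℤ) : R)) fun _ => univ,
    Fintype.piFinset_univ, sum_image hinj.injOn]

variable {m : ℕ}

theorem numPositiveOrderings_univ {G : Type*} [AddCommGroup G] [LinearOrder G] (y : Fin m → G) :
    numPositiveOrderings y univ = #{σ : Equiv.Perm (Fin m) | IsPositiveWalk (y ∘ σ)} := by
  rw [numPositiveOrderings, card_univ, Fintype.card_fin]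
  symm
  refine card_bij (fun σ _ => σ) (fun σ hσ => ?_) (fun σ _ τ _ h => DFunLike.coe_injective h) ?_
  · simpa [positiveOrderings, σ.injective] using hσ
  · intro f hf
    obtain ⟨hinj, hwalk⟩ : f.Injective ∧ IsPositiveWalk (y ∘ f) := by
      simpa [positiveOrderings] using hf
    exact ⟨Equiv.ofBijective f (Finite.injective_iff_bijective.1 hinj), by simpa using hwalk, rfl⟩

theorem card_signed_positive_walks {R : Type*} [Ring R] [LinearOrder R] [IsStrictOrderedRing R]
    (x : Fin m → R) :
    #{p ∈ (univ : Finset (Equiv.Perm (Fin m))) ×ˢ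
        Fintype.piFinset fun _ : Fin m => ({-1, 1} : Finset R) |
        ∀ t, 0 < ∑ i with i ≤ t, p.2 i * x (p.1 i)} = numSignedPositiveOrderings x univ := by
  have hwalk (σ : Equiv.Perm (Fin m)) (ε : Fin m → ℤˣ) :
      (∀ t, 0 < ∑ i with i ≤ t, ((ε i : ℤ) : R) * x (σ i)) ↔
        IsPositiveWalk (((ε ∘ σ.symm) • x) ∘ σ) := by
    simp [IsPositiveWalk, filter_ge_eq_Iic, Units.smul_def]
  calc _
    _ = ∑ σ : Equiv.Perm (Fin m), ∑ ε : Fin m → ℤˣ,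
          if IsPositiveWalk (((ε ∘ σ.symm) • x) ∘ σ) then 1 else 0 := by
      rw [card_filter, sum_product]
      simp only [sum_piFinset_neg_one_one, hwalk]
    _ = ∑ σ : Equiv.Perm (Fin m), ∑ ε : Fin m → ℤˣ,
          if IsPositiveWalk ((ε • x) ∘ σ) then 1 else 0 :=
      sum_congr rfl fun σ _ => Equiv.sum_comp (σ.arrowCongr (Equiv.refl ℤˣ)) fun ε =>
        if IsPositiveWalk ((ε • x) ∘ σ) then 1 else 0
    _ = numSignedPositiveOrderings x univ := by
      rw [sum_comm]
      simp only [numSignedPositiveOrderings, numPositiveOrderings_univ, card_filter]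

end Permutations

theorem stmt_13_general {R : Type*} [Ring R] [LinearOrder R] [IsStrictOrderedRing R]
    (m : ℕ) (x : Fin m → R) (hDSS : HasDistinctSubsetSums x) :
    (#{p ∈ (univ : Finset (Equiv.Perm (Fin m))) ×ˢ
        Fintype.piFinset fun _ : Fin m => ({-1, 1} : Finset R) |
        ∀ t, 0 < ∑ i with i ≤ t, p.2 i * x (p.1 i)} : ℝ) / (m ! * 2 ^ m) =
      ((2 * m).choose m : ℝ) / 4 ^ m := by
  have hcount : numSignedPositiveOrderings x univ * 4 ^ m = 2 ^ m * (m ! * m.centralBinom) := by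
    simpa using numSignedPositiveOrderings_mul_four_pow hDSS univ
  rw [card_signed_positive_walks, ← Nat.centralBinom_eq_two_mul_choose,
    div_eq_div_iff (by positivity) (by positivity)]
  exact_mod_cast hcount.trans (by ring)

/-- Sparre Andersen's fluctuation theorem: if `x ∈ ℝ^m` has the distinct subset-sum
property, then the random walk `W_x(t) = Σ_{i=1}^t ε_i x_{σ(i)}`, with `σ` a uniformly
random permutation of `[m]` and `ε` uniform in `{±1}^m`, satisfies
`P[∀ t ∈ [m], W_x(t) > 0] = C(2m, m)/4^m`. -/
theorem stmt_13 (m : ℕ) (x : Fin m → ℝ)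
    (hDSS : ∀ A B : Finset (Fin m), Disjoint A B → A ≠ B →
      ∑ i ∈ A, x i ≠ ∑ i ∈ B, x i) :
    (((Finset.univ ×ˢ Fintype.piFinset fun _ : Fin m => ({-1, 1} : Finset ℝ)).filter
        (fun p : Equiv.Perm (Fin m) × (Fin m → ℝ) =>
          ∀ t : Fin m,
            0 < ∑ i ∈ Finset.univ.filter (fun i => i ≤ t), p.2 i * x (p.1 i))).card : ℝ)
        / (m.factorial * 2 ^ m)
      = ((2 * m).choose m : ℝ) / 4 ^ m := by
  exact stmt_13_general m x hDSS
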